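/- arXiv:2208.09568 — 11 statements merged into one kernel-verified Lean document; each statement's English description precedes it below -/
import Mathlib

section
/- For every treatment value j : Fin m and outcome value i : Fin n, the probability of the joint event that the potential outcome under treatment j equals i and the observed outcome equals i satisfies the two-sided bound: max{ P(X = j ∧ Y = i), P(Yp j = i) + P(Y = i) − 1 } ≤ P(Yp j = i ∧ Y = i) ≤ min{ P(Yp j = i), P(Y = i) }. (This is Theorem 1 of the paper, bounding the probability of causation P(y_i_{x_j}, y_i) from experimental data P(y_i_{x_j}) and observational data.) -/
open MeasureTheory

/-- Real-valued probability of an event. -/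
noncomputable def pr {Ω : Type*} [MeasurableSpace Ω] (P : Measure Ω) (A : Set Ω) : ℝ :=
  (P A).toReal

/-- Theorem 1: bounds for `P(y_i_{x_j}, y_i)`. -/
theorem bounds_yixj_yi
    {Ω : Type*} [MeasurableSpace Ω] (P : Measure Ω) [IsProbabilityMeasure P]
    {m n : ℕ} (hm : 0 < m) (hn : 0 < n)
    (X : Ω → Fin m) (Y : Ω → Fin n) (Yp : Fin m → Ω → Fin n)
    (hX : Measurable X) (hY : Measurable Y) (hYp : ∀ j, Measurable (Yp j))
    (hconsist : ∀ ω, Y ω = Yp (X ω) ω)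
    (j : Fin m) (i : Fin n) :
    max (pr P {ω | X ω = j ∧ Y ω = i})
        (pr P {ω | Yp j ω = i} + pr P {ω | Y ω = i} - 1)
      ≤ pr P {ω | Yp j ω = i ∧ Y ω = i} ∧
    pr P {ω | Yp j ω = i ∧ Y ω = i}
      ≤ min (pr P {ω | Yp j ω = i}) (pr P {ω | Y ω = i}) := by
  have mono : ∀ A B : Set Ω, A ⊆ B → pr P A ≤ pr P B := fun A B h =>
    measureReal_mono (μ := P) h
  refine ⟨max_le (mono _ _ ?_) ?_, le_min (mono _ _ fun ω h => h.1) (mono _ _ fun ω h => h.2)⟩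
  · rintro ω ⟨h1, h2⟩
    refine ⟨?_, h2⟩
    have h := hconsist ω
    rw [h1] at h
    exact h ▸ h2
  · have hB : MeasurableSet {ω | Y ω = i} := hY (measurableSet_singleton i)
    have h := measureReal_union_add_inter (μ := P) (s := {ω | Yp j ω = i}) hB
    have h1 : P.real ({ω | Yp j ω = i} ∪ {ω | Y ω = i}) ≤ 1 := measureReal_le_one
    change P.real {ω | Yp j ω = i} + P.real {ω | Y ω = i} - 1
      ≤ P.real ({ω | Yp j ω = i} ∩ {ω | Y ω = i})
    linarith
end

section
/- For all j : Fin m and i, k : Fin n with i ≠ k: max{ 0, P(Yp j = i) + P(Y = k) − 1, Σ_{p : Fin m, p ≠ j} max{0, P(Yp j = i) + P(X = p ∧ Y = k) − 1 + P(X = j) − P(X = j ∧ Y = i)} } ≤ P(Yp j = i ∧ Y = k) ≤ min{ P(Yp j = i) − P(X = j ∧ Y = i), P(Y = k) − P(X = j ∧ Y = k) }. (This is Theorem 2 of the paper, bounding P(y_i_{x_j}, y_k) for i ≠ k.) -/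
open MeasureTheory

theorem pr_aux {Ω : Type*} [MeasurableSpace Ω] (P : Measure Ω) [IsProbabilityMeasure P]
    {A B C D : Set Ω} (hB : MeasurableSet B) (hA : A ⊆ C) (hBC : B ⊆ C) (hD : A ∩ B ⊆ D) :
    pr P A + pr P B ≤ pr P C + pr P D := by
  have h := measureReal_union_add_inter (μ := P) (s := A) (t := B) hB
  have h1 : P.real (A ∪ B) ≤ P.real C := measureReal_mono (Set.union_subset hA hBC)
  have h2 : P.real (A ∩ B) ≤ P.real D := measureReal_mono hD
  change P.real A + P.real B ≤ P.real C + P.real D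
  linarith

/-- Theorem 2: bounds for `P(y_i_{x_j}, y_k)` when `i ≠ k`. -/
theorem bounds_yixj_yk
    {Ω : Type*} [MeasurableSpace Ω] (P : Measure Ω) [IsProbabilityMeasure P]
    {m n : ℕ} (hm : 0 < m) (hn : 0 < n)
    (X : Ω → Fin m) (Y : Ω → Fin n) (Yp : Fin m → Ω → Fin n)
    (hX : Measurable X) (hY : Measurable Y) (hYp : ∀ j, Measurable (Yp j))
    (hconsist : ∀ ω, Y ω = Yp (X ω) ω)
    (j : Fin m) (i k : Fin n) (hik : i ≠ k) :
    max (max 0 (pr P {ω | Yp j ω = i} + pr P {ω | Y ω = k} - 1))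
        (∑ p ∈ Finset.univ.filter (fun p => p ≠ j),
          max 0 (pr P {ω | Yp j ω = i} + pr P {ω | X ω = p ∧ Y ω = k} - 1
                  + pr P {ω | X ω = j} - pr P {ω | X ω = j ∧ Y ω = i}))
      ≤ pr P {ω | Yp j ω = i ∧ Y ω = k} ∧
    pr P {ω | Yp j ω = i ∧ Y ω = k}
      ≤ min (pr P {ω | Yp j ω = i} - pr P {ω | X ω = j ∧ Y ω = i})
            (pr P {ω | Y ω = k} - pr P {ω | X ω = j ∧ Y ω = k}) := by
  have mX : ∀ p, MeasurableSet {ω | X ω = p} := fun p => hX (measurableSet_singleton p)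
  have mY : ∀ p, MeasurableSet {ω | Y ω = p} := fun p => hY (measurableSet_singleton p)
  have mYp : ∀ p, MeasurableSet {ω | Yp j ω = p} := fun p => hYp j (measurableSet_singleton p)
  have mXY : ∀ p q, MeasurableSet {ω | X ω = p ∧ Y ω = q} := fun p q => (mX p).inter (mY q)
  have huniv : pr P Set.univ = 1 := by simp [pr]
  have hempty : pr P ∅ = 0 := by simp [pr]
  have hnn : ∀ A, 0 ≤ pr P A := fun A => ENNReal.toReal_nonneg
  refine ⟨max_le (max_le (hnn _) ?_) ?_, le_min ?_ ?_⟩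
  · have := pr_aux P (A := {ω | Yp j ω = i}) (B := {ω | Y ω = k}) (C := Set.univ)
      (D := {ω | Yp j ω = i ∧ Y ω = k}) (mY k) (Set.subset_univ _) (Set.subset_univ _)
      (fun ω h => h)
    linarith
  · have key : ∑ p ∈ Finset.univ.filter (fun p => p ≠ j),
        pr P {ω | Yp j ω = i ∧ X ω = p ∧ Y ω = k} ≤ pr P {ω | Yp j ω = i ∧ Y ω = k} := by
      have h := measureReal_biUnion_finset (μ := P)
        (s := Finset.univ.filter (fun p => p ≠ j))
        (f := fun p => {ω | Yp j ω = i ∧ X ω = p ∧ Y ω = k})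
        (by
          intro p _ q _ hpq
          refine Set.disjoint_left.mpr ?_
          rintro ω ⟨_, h1, _⟩ ⟨_, h2, _⟩
          exact hpq (h1.symm.trans h2))
        (fun p _ => (mYp i).inter (mXY p k))
      change ∑ p ∈ Finset.univ.filter (fun p => p ≠ j),
        P.real {ω | Yp j ω = i ∧ X ω = p ∧ Y ω = k} ≤ P.real _
      rw [← h]
      refine measureReal_mono ?_
      refine Set.iUnion₂_subset ?_
      rintro p _ ω ⟨h1, _, h2⟩
      exact ⟨h1, h2⟩
    refine le_trans (Finset.sum_le_sum ?_) key
    intro p hp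
    have hpj : p ≠ j := (Finset.mem_filter.mp hp).2
    refine max_le (hnn _) ?_
    have h1 := pr_aux P (A := {ω | Yp j ω = i ∧ X ω ≠ j}) (B := {ω | X ω = p ∧ Y ω = k})
      (C := {ω | X ω ≠ j}) (D := {ω | Yp j ω = i ∧ X ω = p ∧ Y ω = k}) (mXY p k)
      (fun ω h => h.2) (fun ω h => by have := h.1; simp_all) (fun ω h => ⟨h.1.1, h.2⟩)
    have h2 := pr_aux P (A := {ω | X ω ≠ j}) (B := {ω | X ω = j}) (C := Set.univ) (D := ∅)
      (mX j) (Set.subset_univ _) (Set.subset_univ _) (fun ω h => h.1 h.2)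
    have h4 : pr P {ω | Yp j ω = i} ≤
        pr P {ω | Yp j ω = i ∧ X ω ≠ j} + pr P {ω | X ω = j ∧ Y ω = i} := by
      refine le_trans ?_ (measureReal_union_le (μ := P) _ _)
      refine measureReal_mono ?_
      intro ω h
      by_cases hx : X ω = j
      · right; exact ⟨hx, by rw [hconsist, hx]; exact h⟩
      · left; exact ⟨h, hx⟩
    linarith
  · have := pr_aux P (A := {ω | Yp j ω = i ∧ Y ω = k}) (B := {ω | X ω = j ∧ Y ω = i})
      (C := {ω | Yp j ω = i}) (D := ∅) (mXY j i) (fun ω h => h.1)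
      (fun ω h => by have h1 := hconsist ω; rw [h.1, h.2] at h1; exact h1.symm)
      (fun ω h => hik (h.2.2.symm.trans h.1.2))
    linarith
  · have := pr_aux P (A := {ω | Yp j ω = i ∧ Y ω = k}) (B := {ω | X ω = j ∧ Y ω = k})
      (C := {ω | Y ω = k}) (D := ∅) (mXY j k) (fun ω h => h.2) (fun ω h => h.2)
      (fun ω h => by
        have h1 := hconsist ω
        rw [h.2.1, h.2.2] at h1
        exact hik (h.1.1.symm.trans h1.symm))
    linarith
end

section
/- For all i : Fin n and j, k : Fin m with j ≠ k: max{ 0, P(Yp j = i) − P(X = j ∧ Y = i) − 1 + P(X = j) + P(X = k) } ≤ P(Yp j = i ∧ X = k) ≤ min{ P(Yp j = i) − P(X = j ∧ Y = i), P(X = k) }. (This is Theorem 3 of the paper, bounding P(y_i_{x_j}, x_k) for j ≠ k.) -/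
open MeasureTheory

/-- Theorem 3: bounds for `P(y_i_{x_j}, x_k)` when `j ≠ k`. -/
theorem bounds_yixj_xk
    {Ω : Type*} [MeasurableSpace Ω] (P : Measure Ω) [IsProbabilityMeasure P]
    {m n : ℕ} (hm : 0 < m) (hn : 0 < n)
    (X : Ω → Fin m) (Y : Ω → Fin n) (Yp : Fin m → Ω → Fin n)
    (hX : Measurable X) (hY : Measurable Y) (hYp : ∀ j, Measurable (Yp j))
    (hconsist : ∀ ω, Y ω = Yp (X ω) ω)
    (i : Fin n) (j k : Fin m) (hjk : j ≠ k) :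
    max 0 (pr P {ω | Yp j ω = i} - pr P {ω | X ω = j ∧ Y ω = i} - 1
            + pr P {ω | X ω = j} + pr P {ω | X ω = k})
      ≤ pr P {ω | Yp j ω = i ∧ X ω = k} ∧
    pr P {ω | Yp j ω = i ∧ X ω = k}
      ≤ min (pr P {ω | Yp j ω = i} - pr P {ω | X ω = j ∧ Y ω = i})
            (pr P {ω | X ω = k}) := by
  have hJ : MeasurableSet {ω | X ω = j} := hX (measurableSet_singleton j)
  have hK : MeasurableSet {ω | X ω = k} := hX (measurableSet_singleton k)
  have e1 : {ω | X ω = j ∧ Y ω = i} = {ω | Yp j ω = i} ∩ {ω | X ω = j} := by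
    ext ω
    simp only [Set.mem_ofPred_eq, Set.mem_inter_iff]
    constructor
    · rintro ⟨h1, h2⟩
      rw [hconsist, h1] at h2
      exact ⟨h2, h1⟩
    · rintro ⟨h1, h2⟩
      refine ⟨h2, ?_⟩
      rw [hconsist, h2, h1]
  have e2 : {ω | Yp j ω = i ∧ X ω = k} = {ω | Yp j ω = i} ∩ {ω | X ω = k} := rfl
  have e3 : ({ω | Yp j ω = i} ∪ {ω | X ω = j}) ∩ {ω | X ω = k}
      = {ω | Yp j ω = i} ∩ {ω | X ω = k} := by
    ext ω
    simp only [Set.mem_ofPred_eq, Set.mem_inter_iff, Set.mem_union]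
    constructor
    · rintro ⟨h1 | h1, h2⟩
      · exact ⟨h1, h2⟩
      · exact absurd (h1.symm.trans h2) hjk
    · rintro ⟨h1, h2⟩
      exact ⟨Or.inl h1, h2⟩
  have hpr : ∀ S : Set Ω, pr P S = P.real S := fun _ => rfl
  rw [e1, e2]
  simp only [hpr]
  generalize {ω | Yp j ω = i} = A at *
  have hd : Disjoint {ω | X ω = j} {ω | X ω = k} := by
    rw [Set.disjoint_left]
    intro ω h1 h2
    exact hjk (h1.symm.trans h2)
  generalize {ω | X ω = j} = J at *
  generalize {ω | X ω = k} = K at *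
  have u1 := measureReal_union_add_inter (μ := P) (s := A) hJ
  have u2 := measureReal_union_add_inter (μ := P) (s := A ∪ J) hK
  rw [e3] at u2
  have b1 : P.real (A ∪ J ∪ K) ≤ 1 := measureReal_le_one
  have d1 := measureReal_inter_add_sdiff (μ := P) (s := A) hJ
  have d2 : P.real (A ∩ K) ≤ P.real (A \ J) :=
    measureReal_mono (fun ω h => ⟨h.1, fun h' => Set.disjoint_left.1 hd h' h.2⟩)
  have d3 : P.real (A ∩ K) ≤ P.real K := measureReal_mono Set.inter_subset_right
  have d4 : 0 ≤ P.real (A ∩ K) := measureReal_nonneg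
  exact ⟨max_le d4 (by linarith), le_min (by linarith) d3⟩
end

section
/- For all i, k : Fin n and j, p : Fin m with j ≠ p: max{ 0, P(Yp j = i) + P(X = p ∧ Y = k) − 1 + P(X = j) − P(X = j ∧ Y = i) } ≤ P(Yp j = i ∧ Y = k ∧ X = p) ≤ min{ P(Yp j = i) − P(X = j ∧ Y = i), P(X = p ∧ Y = k) }. (This is Theorem 4 of the paper, bounding P(y_i_{x_j}, y_k, x_p) for j ≠ p; the paper notes it is the general form of the probabilities of necessity and of sufficiency.) -/
open MeasureTheory

/-- Theorem 4: bounds for `P(y_i_{x_j}, y_k, x_p)` when `j ≠ p`. -/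
theorem bounds_yixj_yk_xp
    {Ω : Type*} [MeasurableSpace Ω] (P : Measure Ω) [IsProbabilityMeasure P]
    {m n : ℕ} (hm : 0 < m) (hn : 0 < n)
    (X : Ω → Fin m) (Y : Ω → Fin n) (Yp : Fin m → Ω → Fin n)
    (hX : Measurable X) (hY : Measurable Y) (hYp : ∀ j, Measurable (Yp j))
    (hconsist : ∀ ω, Y ω = Yp (X ω) ω)
    (i k : Fin n) (j p : Fin m) (hjp : j ≠ p) :
    max 0 (pr P {ω | Yp j ω = i} + pr P {ω | X ω = p ∧ Y ω = k} - 1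
            + pr P {ω | X ω = j} - pr P {ω | X ω = j ∧ Y ω = i})
      ≤ pr P {ω | Yp j ω = i ∧ Y ω = k ∧ X ω = p} ∧
    pr P {ω | Yp j ω = i ∧ Y ω = k ∧ X ω = p}
      ≤ min (pr P {ω | Yp j ω = i} - pr P {ω | X ω = j ∧ Y ω = i})
            (pr P {ω | X ω = p ∧ Y ω = k}) := by
  have hJ : MeasurableSet {ω | X ω = j} := hX (measurableSet_singleton j)
  have hB : MeasurableSet {ω | X ω = p ∧ Y ω = k} :=
    (hX (measurableSet_singleton p)).inter (hY (measurableSet_singleton k))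
  have e1 : {ω | Yp j ω = i} ∩ {ω | X ω = j} = {ω | X ω = j ∧ Y ω = i} := by
    ext ω
    simp only [Set.mem_inter_iff, Set.mem_setOf_eq]
    constructor
    · rintro ⟨h1, h2⟩
      exact ⟨h2, by rw [hconsist, h2, h1]⟩
    · rintro ⟨h1, h2⟩
      exact ⟨by rw [← h2, hconsist, h1], h1⟩
  have e2 : ({ω | Yp j ω = i} \ {ω | X ω = j}) ∩ {ω | X ω = p ∧ Y ω = k}
      = {ω | Yp j ω = i ∧ Y ω = k ∧ X ω = p} := by
    ext ω
    simp only [Set.mem_inter_iff, Set.mem_diff, Set.mem_setOf_eq]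
    constructor
    · rintro ⟨⟨h1, _⟩, h2, h3⟩
      exact ⟨h1, h3, h2⟩
    · rintro ⟨h1, h3, h2⟩
      exact ⟨⟨h1, fun h => hjp (h.symm.trans h2)⟩, h2, h3⟩
  have q1 := measureReal_inter_add_diff (μ := P) (s := {ω | Yp j ω = i}) hJ
  have q2 := measureReal_union_add_inter (μ := P) (s := {ω | Yp j ω = i} \ {ω | X ω = j}) hB
  have hd : Disjoint (({ω | Yp j ω = i} \ {ω | X ω = j}) ∪ {ω | X ω = p ∧ Y ω = k})
      {ω | X ω = j} := by
    rw [Set.disjoint_left]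
    rintro ω (⟨_, h⟩ | ⟨h, _⟩) h'
    · exact h h'
    · exact hjp (Eq.trans (Eq.symm h') h)
  have q3 := measureReal_union (μ := P) hd hJ
  have q4 : P.real ((({ω | Yp j ω = i} \ {ω | X ω = j}) ∪ {ω | X ω = p ∧ Y ω = k}) ∪
      {ω | X ω = j}) ≤ 1 := measureReal_le_one
  have q5 : P.real (({ω | Yp j ω = i} \ {ω | X ω = j}) ∩ {ω | X ω = p ∧ Y ω = k})
      ≤ P.real ({ω | Yp j ω = i} \ {ω | X ω = j}) := measureReal_mono Set.inter_subset_left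
  have q6 : P.real (({ω | Yp j ω = i} \ {ω | X ω = j}) ∩ {ω | X ω = p ∧ Y ω = k})
      ≤ P.real {ω | X ω = p ∧ Y ω = k} := measureReal_mono Set.inter_subset_right
  rw [e1] at q1
  rw [e2] at q2 q5 q6
  have hpr : ∀ A, pr P A = P.real A := fun _ => rfl
  simp only [hpr]
  refine ⟨max_le measureReal_nonneg (by linarith), le_min (by linarith) q6⟩
end

section
/- Let k ≥ 1, let j : Fin k → Fin m be injective and i : Fin k → Fin n, and write J for the event ⋂_{t : Fin k} {Yp (j t) = i t}. Suppose real numbers are given such that for each t : Fin k, L t ≤ P(⋂_{s ≠ t} {Yp (j s) = i s}) ≤ U t; for each r : Fin k, A r ≤ P((⋂_{s ≠ r} {Yp (j s) = i s}) ∧ X = j r ∧ Y = i r) ≤ B r; and for each p : Fin m outside the range of j, C p ≤ P(J ∧ X = p) ≤ D p. Then max{ 0, (Σ_t P(Yp (j t) = i t)) − k + 1, max_t (L t + P(Yp (j t) = i t) − 1), Σ_r A r + Σ_{p ∉ range j} C p } ≤ P(J) ≤ min{ min_t P(Yp (j t) = i t), min_t U t, Σ_r B r + Σ_{p ∉ range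 j} D p }. (This is Theorem 5 of the paper, bounding P(y_{i_1}_{x_{j_1}}, …, y_{i_k}_{x_{j_k}}) in terms of any valid lower/upper bounds of the lower-order probabilities of causation; it is the general form of PNS.) -/
open MeasureTheory

/-- Theorem 5: bounds for `P(y_{i_1}_{x_{j_1}}, …, y_{i_k}_{x_{j_k}})`. -/
theorem bounds_multi
    {Ω : Type*} [MeasurableSpace Ω] (P : Measure Ω) [IsProbabilityMeasure P]
    {m n : ℕ} (hm : 0 < m) (hn : 0 < n)
    (X : Ω → Fin m) (Y : Ω → Fin n) (Yp : Fin m → Ω → Fin n)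
    (hX : Measurable X) (hY : Measurable Y) (hYp : ∀ j, Measurable (Yp j))
    (hconsist : ∀ ω, Y ω = Yp (X ω) ω)
    {k : ℕ} (hk : 1 ≤ k) (j : Fin k → Fin m) (hj : Function.Injective j)
    (i : Fin k → Fin n)
    (L U A B : Fin k → ℝ) (C D : Fin m → ℝ)
    (hL : ∀ t, L t ≤ pr P {ω | ∀ s, s ≠ t → Yp (j s) ω = i s})
    (hU : ∀ t, pr P {ω | ∀ s, s ≠ t → Yp (j s) ω = i s} ≤ U t)
    (hA : ∀ r, A r ≤ pr P {ω | (∀ s, s ≠ r → Yp (j s) ω = i s) ∧ X ω = j r ∧ Y ω = i r})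
    (hB : ∀ r, pr P {ω | (∀ s, s ≠ r → Yp (j s) ω = i s) ∧ X ω = j r ∧ Y ω = i r} ≤ B r)
    (hC : ∀ p, p ∉ Set.range j → C p ≤ pr P {ω | (∀ t, Yp (j t) ω = i t) ∧ X ω = p})
    (hD : ∀ p, p ∉ Set.range j → pr P {ω | (∀ t, Yp (j t) ω = i t) ∧ X ω = p} ≤ D p) :
    max (max 0 ((∑ t, pr P {ω | Yp (j t) ω = i t}) - (k : ℝ) + 1))
        (max (⨆ t, (L t + pr P {ω | Yp (j t) ω = i t} - 1))
             ((∑ r, A r) + ∑ p ∈ Finset.univ.filter (fun p => ∀ t, j t ≠ p), C p))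
      ≤ pr P {ω | ∀ t, Yp (j t) ω = i t} ∧
    pr P {ω | ∀ t, Yp (j t) ω = i t}
      ≤ min (min (⨅ t, pr P {ω | Yp (j t) ω = i t}) (⨅ t, U t))
            ((∑ r, B r) + ∑ p ∈ Finset.univ.filter (fun p => ∀ t, j t ≠ p), D p) := by
  have hE : ∀ t, MeasurableSet {ω | Yp (j t) ω = i t} := fun t =>
    hYp (j t) (measurableSet_singleton (i t))
  have hJ : MeasurableSet {ω | ∀ t, Yp (j t) ω = i t} := by
    rw [Set.setOf_forall]; exact MeasurableSet.iInter hE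
  have hne : Nonempty (Fin k) := ⟨⟨0, hk⟩⟩
  have hpr : ∀ S, pr P S = P.real S := fun S => rfl
  -- total probability
  have htot : pr P {ω | ∀ t, Yp (j t) ω = i t}
      = ∑ p, pr P {ω | (∀ t, Yp (j t) ω = i t) ∧ X ω = p} := by
    have h1 : {ω | ∀ t, Yp (j t) ω = i t}
        = ⋃ p, {ω | (∀ t, Yp (j t) ω = i t) ∧ X ω = p} := by
      ext ω; simp
    conv_lhs => rw [h1]
    simp only [hpr]
    rw [measureReal_iUnion_fintype]
    · intro p q hpq
      rw [Function.onFun, Set.disjoint_left]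
      rintro ω ⟨_, h⟩ ⟨_, h'⟩
      exact hpq (h.symm.trans h')
    · intro p
      exact hJ.inter (hX (measurableSet_singleton p))
  have hsplit : pr P {ω | ∀ t, Yp (j t) ω = i t}
      = (∑ r, pr P {ω | (∀ s, s ≠ r → Yp (j s) ω = i s) ∧ X ω = j r ∧ Y ω = i r})
        + ∑ p ∈ Finset.univ.filter (fun p => ∀ t, j t ≠ p),
            pr P {ω | (∀ t, Yp (j t) ω = i t) ∧ X ω = p} := by
    rw [htot, ← Finset.sum_filter_not_add_sum_filter Finset.univ (fun p => ∀ t, j t ≠ p)]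
    congr 1
    have himg : Finset.univ.filter (fun p => ¬ ∀ t, j t ≠ p) = Finset.univ.image j := by
      ext p; simp
    rw [himg, Finset.sum_image (fun a _ b _ h => hj h)]
    refine Finset.sum_congr rfl fun r _ => ?_
    congr 1
    ext ω
    simp only [Set.mem_setOf_eq]
    constructor
    · rintro ⟨h, hx⟩
      exact ⟨fun s _ => h s, hx, by rw [hconsist, hx, h r]⟩
    · rintro ⟨h, hx, hy⟩
      refine ⟨fun t => ?_, hx⟩
      by_cases htr : t = r
      · rw [htr, ← hx, ← hconsist, hy]
      · exact h t htr
  have hmem : ∀ p ∈ Finset.univ.filter (fun p => ∀ t, j t ≠ p), p ∉ Set.range j := by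
    intro p hp
    rintro ⟨t, ht⟩
    exact (Finset.mem_filter.mp hp).2 t ht
  refine ⟨max_le (max_le ?_ ?_) (max_le ?_ ?_), le_min (le_min ?_ ?_) ?_⟩
  · exact ENNReal.toReal_nonneg
  · have h1 : {ω | ∀ t, Yp (j t) ω = i t}ᶜ = ⋃ t, {ω | Yp (j t) ω = i t}ᶜ := by
      ext ω; simp
    have h2 : P.real {ω | ∀ t, Yp (j t) ω = i t}ᶜ ≤ ∑ t, P.real {ω | Yp (j t) ω = i t}ᶜ := by
      rw [h1]; exact measureReal_iUnion_fintype_le _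
    rw [probReal_compl_eq_one_sub hJ,
      Finset.sum_congr rfl (fun t _ => probReal_compl_eq_one_sub (μ := P) (hE t)),
      Finset.sum_sub_distrib] at h2
    simp only [Finset.sum_const, Finset.card_univ, Fintype.card_fin, nsmul_eq_mul, mul_one] at h2
    simp only [hpr]
    linarith
  · refine ciSup_le fun t => ?_
    have h1 : {ω | ∀ t, Yp (j t) ω = i t}
        = {ω | ∀ s, s ≠ t → Yp (j s) ω = i s} ∩ {ω | Yp (j t) ω = i t} := by
      ext ω
      simp only [Set.mem_setOf_eq, Set.mem_inter_iff]
      constructor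
      · exact fun h => ⟨fun s _ => h s, h t⟩
      · rintro ⟨h, h'⟩ s
        by_cases hs : s = t
        · rw [hs, h']
        · exact h s hs
    have h2 := measureReal_union_add_inter (μ := P)
      (s := {ω | ∀ s, s ≠ t → Yp (j s) ω = i s}) (hE t)
    have h3 : P.real ({ω | ∀ s, s ≠ t → Yp (j s) ω = i s} ∪ {ω | Yp (j t) ω = i t}) ≤ 1 :=
      measureReal_le_one
    rw [← h1] at h2
    have h4 := hL t
    simp only [hpr] at h4 ⊢
    linarith
  · rw [hsplit]
    exact add_le_add (Finset.sum_le_sum fun r _ => hA r)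
      (Finset.sum_le_sum fun p hp => hC p (hmem p hp))
  · exact le_ciInf fun t => measureReal_mono (μ := P) (fun ω h => h t)
  · refine le_ciInf fun t => le_trans ?_ (hU t)
    exact measureReal_mono (μ := P) (fun ω h s _ => h s)
  · rw [hsplit]
    exact add_le_add (Finset.sum_le_sum fun r _ => hB r)
      (Finset.sum_le_sum fun p hp => hD p (hmem p hp))
end

section
/- Let k ≥ 1, let j : Fin k → Fin m be injective, i : Fin k → Fin n, and let p₀ : Fin m lie outside the range of j; write J for the event ⋂_{t : Fin k} {Yp (j t) = i t}. Suppose real numbers are given such that for each t : Fin k, L t ≤ P(⋂_{s ≠ t} {Yp (j s) = i s}) ≤ U t and E t ≤ P(Yp (j t) = i t ∧ X = p₀) ≤ F t. Then max{ 0, (Σ_t P(Yp (j t) = i t)) + P(X = p₀) − k, max_t (L t + E t − 1) } ≤ P(J ∧ X = p₀) ≤ min{ min_t P(Yp (j t) = i t), P(X = p₀), min_t U t, min_t F t }. (This is Theorem 6 of the paper, bounding P(y_{i_1}_{x_{j_1}}, …, y_{i_k}_{x_{j_k}}, x_p).) -/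
open MeasureTheory

theorem pr_inter_ge {Ω : Type*} [MeasurableSpace Ω] (P : Measure Ω) [IsProbabilityMeasure P]
    (A B : Set Ω) (hB : MeasurableSet B) : pr P A + pr P B - 1 ≤ pr P (A ∩ B) := by
  have h := measureReal_union_add_inter (μ := P) (s := A) hB
  have h1 : P.real (A ∪ B) ≤ 1 := measureReal_le_one
  change P.real A + P.real B - 1 ≤ P.real (A ∩ B)
  linarith

theorem pr_mono' {Ω : Type*} [MeasurableSpace Ω] (P : Measure Ω) [IsProbabilityMeasure P]
    {A B : Set Ω} (h : A ⊆ B) : pr P A ≤ pr P B :=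
  measureReal_mono (μ := P) h

theorem pr_finset_ge {Ω ι : Type*} [MeasurableSpace Ω] (P : Measure Ω) [IsProbabilityMeasure P]
    (A : ι → Set Ω) (hA : ∀ t, MeasurableSet (A t)) (B : Set Ω) (S : Finset ι) :
    (∑ t ∈ S, pr P (A t)) + pr P B - (S.card : ℝ) ≤ pr P {ω | (∀ t ∈ S, ω ∈ A t) ∧ ω ∈ B} := by
  classical
  induction S using Finset.induction_on with
  | empty => simp
  | insert a S ha ih =>
    rw [Finset.sum_insert ha, Finset.card_insert_of_notMem ha]
    have h := pr_inter_ge P {ω | (∀ t ∈ S, ω ∈ A t) ∧ ω ∈ B} (A a) (hA a)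
    have h2 : pr P ({ω | (∀ t ∈ S, ω ∈ A t) ∧ ω ∈ B} ∩ A a)
        ≤ pr P {ω | (∀ t ∈ insert a S, ω ∈ A t) ∧ ω ∈ B} := by
      apply pr_mono'
      rintro ω ⟨⟨h1, h2⟩, h3⟩
      refine ⟨fun t ht => ?_, h2⟩
      rcases Finset.mem_insert.1 ht with rfl | ht
      · exact h3
      · exact h1 t ht
    push_cast
    linarith

/-- Theorem 6: bounds for `P(y_{i_1}_{x_{j_1}}, …, y_{i_k}_{x_{j_k}}, x_p)`. -/
theorem bounds_multi_xp
    {Ω : Type*} [MeasurableSpace Ω] (P : Measure Ω) [IsProbabilityMeasure P]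
    {m n : ℕ} (hm : 0 < m) (hn : 0 < n)
    (X : Ω → Fin m) (Y : Ω → Fin n) (Yp : Fin m → Ω → Fin n)
    (hX : Measurable X) (hY : Measurable Y) (hYp : ∀ j, Measurable (Yp j))
    (hconsist : ∀ ω, Y ω = Yp (X ω) ω)
    {k : ℕ} (hk : 1 ≤ k) (j : Fin k → Fin m) (hj : Function.Injective j)
    (i : Fin k → Fin n) (p₀ : Fin m) (hp₀ : p₀ ∉ Set.range j)
    (L U E F : Fin k → ℝ)
    (hL : ∀ t, L t ≤ pr P {ω | ∀ s, s ≠ t → Yp (j s) ω = i s})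
    (hU : ∀ t, pr P {ω | ∀ s, s ≠ t → Yp (j s) ω = i s} ≤ U t)
    (hE : ∀ t, E t ≤ pr P {ω | Yp (j t) ω = i t ∧ X ω = p₀})
    (hF : ∀ t, pr P {ω | Yp (j t) ω = i t ∧ X ω = p₀} ≤ F t) :
    max (max 0 ((∑ t, pr P {ω | Yp (j t) ω = i t}) + pr P {ω | X ω = p₀} - (k : ℝ)))
        (⨆ t, (L t + E t - 1))
      ≤ pr P {ω | (∀ t, Yp (j t) ω = i t) ∧ X ω = p₀} ∧
    pr P {ω | (∀ t, Yp (j t) ω = i t) ∧ X ω = p₀}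
      ≤ min (min (⨅ t, pr P {ω | Yp (j t) ω = i t}) (pr P {ω | X ω = p₀}))
            (min (⨅ t, U t) (⨅ t, F t)) := by
  have hmY : ∀ t, MeasurableSet {ω | Yp (j t) ω = i t} := fun t =>
    hYp (j t) (measurableSet_singleton (i t))
  have hmX : MeasurableSet {ω | X ω = p₀} := hX (measurableSet_singleton p₀)
  have : Nonempty (Fin k) := ⟨⟨0, hk⟩⟩
  constructor
  · refine max_le (max_le ENNReal.toReal_nonneg ?_) (ciSup_le fun t => ?_)
    · have h := pr_finset_ge P (fun t => {ω | Yp (j t) ω = i t}) hmY {ω | X ω = p₀} Finset.univ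
      simpa using h
    · have h := pr_inter_ge P {ω | ∀ s, s ≠ t → Yp (j s) ω = i s}
        {ω | Yp (j t) ω = i t ∧ X ω = p₀} ((hmY t).inter hmX)
      have h2 : pr P ({ω | ∀ s, s ≠ t → Yp (j s) ω = i s} ∩ {ω | Yp (j t) ω = i t ∧ X ω = p₀})
          ≤ pr P {ω | (∀ t, Yp (j t) ω = i t) ∧ X ω = p₀} := by
        apply pr_mono'
        rintro ω ⟨h1, h2, h3⟩
        refine ⟨fun s => ?_, h3⟩
        by_cases hs : s = t
        · rw [hs]; exact h2
        · exact h1 s hs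
      linarith [hL t, hE t]
  · refine le_min (le_min (le_ciInf fun t => ?_) ?_)
      (le_min (le_ciInf fun t => ?_) (le_ciInf fun t => ?_))
    · exact pr_mono' P fun ω h => h.1 t
    · exact pr_mono' P fun ω h => h.2
    · refine le_trans ?_ (hU t)
      exact pr_mono' P (fun ω h s _ => h.1 s)
    · refine le_trans ?_ (hF t)
      exact pr_mono' P (fun ω h => ⟨h.1 t, h.2⟩)
end

section
/- Let k ≥ 1, let j : Fin k → Fin m be injective and i : Fin k → Fin n, and write J for the event ⋂_{t : Fin k} {Yp (j t) = i t}. Then P(J) = Σ_{r : Fin k} P((⋂_{s ≠ r} {Yp (j s) = i s}) ∧ X = j r ∧ Y = i r) + Σ_{p ∉ range j} P(J ∧ X = p); that is, partitioning the joint counterfactual event by the observed treatment value, each piece with X = j r reduces (by consistency) to an event involving one fewer hypothetical term together with the observation X = j r, Y = i r. (This is the decomposition identity underlying Theorem 5.) -/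
open MeasureTheory

/-- Decomposition identity underlying Theorem 5. -/
theorem decomposition_multi
    {Ω : Type*} [MeasurableSpace Ω] (P : Measure Ω) [IsProbabilityMeasure P]
    {m n : ℕ} (hm : 0 < m) (hn : 0 < n)
    (X : Ω → Fin m) (Y : Ω → Fin n) (Yp : Fin m → Ω → Fin n)
    (hX : Measurable X) (hY : Measurable Y) (hYp : ∀ j, Measurable (Yp j))
    (hconsist : ∀ ω, Y ω = Yp (X ω) ω)
    {k : ℕ} (hk : 1 ≤ k) (j : Fin k → Fin m) (hj : Function.Injective j)
    (i : Fin k → Fin n) :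
    pr P {ω | ∀ t, Yp (j t) ω = i t}
      = (∑ r, pr P {ω | (∀ s, s ≠ r → Yp (j s) ω = i s) ∧ X ω = j r ∧ Y ω = i r})
        + ∑ p ∈ Finset.univ.filter (fun p => ∀ t, j t ≠ p),
            pr P {ω | (∀ t, Yp (j t) ω = i t) ∧ X ω = p} := by
  have hJ : MeasurableSet {ω | ∀ t, Yp (j t) ω = i t} := by
    rw [Set.setOf_forall]
    exact MeasurableSet.iInter fun t => hYp (j t) (measurableSet_singleton (i t))
  have htot : pr P {ω | ∀ t, Yp (j t) ω = i t}
      = ∑ p, pr P {ω | (∀ t, Yp (j t) ω = i t) ∧ X ω = p} := by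
    have hU : {ω | ∀ t, Yp (j t) ω = i t}
        = ⋃ p, {ω | (∀ t, Yp (j t) ω = i t) ∧ X ω = p} := by
      ext ω
      simp
    unfold pr
    conv_lhs => rw [hU]
    rw [measure_iUnion, tsum_fintype, ENNReal.toReal_sum]
    · intro a _
      exact measure_ne_top _ _
    · intro a b hab
      rw [Function.onFun, Set.disjoint_left]
      rintro ω ⟨_, h1⟩ ⟨_, h2⟩
      exact hab (h1.symm.trans h2)
    · intro p
      exact hJ.inter (hX (measurableSet_singleton p))
  have hpiece : ∀ r, {ω | (∀ s, s ≠ r → Yp (j s) ω = i s) ∧ X ω = j r ∧ Y ω = i r}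
      = {ω | (∀ t, Yp (j t) ω = i t) ∧ X ω = j r} := by
    intro r
    ext ω
    simp only [Set.mem_setOf_eq]
    constructor
    · rintro ⟨h1, h2, h3⟩
      refine ⟨fun t => ?_, h2⟩
      by_cases ht : t = r
      · subst ht
        rw [← h3, hconsist, h2]
      · exact h1 t ht
    · rintro ⟨h1, h2⟩
      refine ⟨fun s _ => h1 s, h2, ?_⟩
      rw [hconsist, h2, h1]
  rw [htot]
  simp_rw [hpiece]
  rw [← Finset.sum_filter_not_add_sum_filter Finset.univ (fun p => ∀ t, j t ≠ p)]
  congr 1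
  rw [← Finset.sum_image (s := Finset.univ) (g := j)
    (f := fun p => pr P {ω | (∀ t, Yp (j t) ω = i t) ∧ X ω = p}) hj.injOn]
  apply Finset.sum_congr _ fun _ _ => rfl
  ext p
  simp
end

section
/- Let k ≥ 1, let j : Fin k → Fin m be injective, i : Fin k → Fin n, and q : Fin n, and write J for the event ⋂_{t : Fin k} {Yp (j t) = i t}. Then P(J ∧ Y = q) = Σ_{r : Fin k, i r = q} P((⋂_{s ≠ r} {Yp (j s) = i s}) ∧ X = j r ∧ Y = q) + Σ_{p ∉ range j} P(J ∧ X = p ∧ Y = q); in particular, the pieces with X = j r and i r ≠ q have probability zero by consistency. (This is the decomposition identity underlying Theorem 7.) -/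
open MeasureTheory

/-- Decomposition identity underlying Theorem 7. -/
theorem decomposition_multi_yq
    {Ω : Type*} [MeasurableSpace Ω] (P : Measure Ω) [IsProbabilityMeasure P]
    {m n : ℕ} (hm : 0 < m) (hn : 0 < n)
    (X : Ω → Fin m) (Y : Ω → Fin n) (Yp : Fin m → Ω → Fin n)
    (hX : Measurable X) (hY : Measurable Y) (hYp : ∀ j, Measurable (Yp j))
    (hconsist : ∀ ω, Y ω = Yp (X ω) ω)
    {k : ℕ} (hk : 1 ≤ k) (j : Fin k → Fin m) (hj : Function.Injective j)
    (i : Fin k → Fin n) (q : Fin n) :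
    pr P {ω | (∀ t, Yp (j t) ω = i t) ∧ Y ω = q}
      = (∑ r ∈ Finset.univ.filter (fun r => i r = q),
          pr P {ω | (∀ s, s ≠ r → Yp (j s) ω = i s) ∧ X ω = j r ∧ Y ω = q})
        + ∑ p ∈ Finset.univ.filter (fun p => ∀ t, j t ≠ p),
            pr P {ω | (∀ t, Yp (j t) ω = i t) ∧ X ω = p ∧ Y ω = q} := by
  have key : ∀ A : Set Ω, pr P A = ∑ p, pr P (X ⁻¹' {p} ∩ A) := by
    intro A
    have h := sum_measure_preimage_singleton (μ := P.restrict A) (f := X) Finset.univ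
      (fun y _ => hX (measurableSet_singleton y))
    simp only [Finset.coe_univ, Set.preimage_univ, Measure.restrict_apply_univ] at h
    unfold pr
    rw [← h, ENNReal.toReal_sum (fun _ _ => measure_ne_top _ _)]
    refine Finset.sum_congr rfl fun p _ => ?_
    rw [Measure.restrict_apply (hX (measurableSet_singleton p))]
  rw [key, ← Finset.sum_filter_not_add_sum_filter Finset.univ (fun p => ∀ t, j t ≠ p)]
  congr 1
  · have himg : Finset.univ.filter (fun p => ¬ ∀ t, j t ≠ p) = Finset.univ.image j := by
      ext p
      simp
    rw [himg, Finset.sum_image (fun a _ b _ h => hj h), Finset.sum_filter]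
    refine Finset.sum_congr rfl fun r _ => ?_
    split_ifs with hr
    · congr 1
      ext ω
      simp only [Set.mem_inter_iff, Set.mem_preimage, Set.mem_singleton_iff, Set.mem_setOf_eq]
      constructor
      · rintro ⟨h1, h2, h3⟩
        exact ⟨fun s _ => h2 s, h1, h3⟩
      · rintro ⟨h1, h2, h3⟩
        refine ⟨h2, fun t => ?_, h3⟩
        by_cases ht : t = r
        · subst ht
          rw [← h2, ← hconsist, h3, hr]
        · exact h1 t ht
    · have : X ⁻¹' {j r} ∩ {ω | (∀ t, Yp (j t) ω = i t) ∧ Y ω = q} = ∅ := by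
        ext ω
        simp only [Set.mem_inter_iff, Set.mem_preimage, Set.mem_singleton_iff, Set.mem_setOf_eq,
          Set.mem_empty_iff_false, iff_false]
        rintro ⟨h1, h2, h3⟩
        apply hr
        rw [← h2 r, ← h1, ← hconsist, h3]
      rw [this]
      simp [pr]
  · refine Finset.sum_congr rfl fun p _ => ?_
    congr 1
    ext ω
    simp only [Set.mem_inter_iff, Set.mem_preimage, Set.mem_singleton_iff, Set.mem_setOf_eq]
    tauto
end

section
/- For every j : Fin m and i : Fin n, the experimental (causal-effect) probability and the observational probabilities satisfy the general relation P(X = j ∧ Y = i) ≤ P(Yp j = i) ≤ P(X = j ∧ Y = i) + 1 − P(X = j). -/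
open MeasureTheory

/-- The general relation between experimental and observational data:
`P(x_j, y_i) ≤ P(y_i_{x_j}) ≤ P(x_j, y_i) + 1 − P(x_j)`. -/
theorem general_relation
    {Ω : Type*} [MeasurableSpace Ω] (P : Measure Ω) [IsProbabilityMeasure P]
    {m n : ℕ} (hm : 0 < m) (hn : 0 < n)
    (X : Ω → Fin m) (Y : Ω → Fin n) (Yp : Fin m → Ω → Fin n)
    (hX : Measurable X) (hY : Measurable Y) (hYp : ∀ j, Measurable (Yp j))
    (hconsist : ∀ ω, Y ω = Yp (X ω) ω)
    (j : Fin m) (i : Fin n) :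
    pr P {ω | X ω = j ∧ Y ω = i} ≤ pr P {ω | Yp j ω = i} ∧
    pr P {ω | Yp j ω = i} ≤ pr P {ω | X ω = j ∧ Y ω = i} + 1 - pr P {ω | X ω = j} := by
  have hA : MeasurableSet {ω | X ω = j} := hX (measurableSet_singleton j)
  have e : {ω | X ω = j ∧ Y ω = i} = {ω | Yp j ω = i} ∩ {ω | X ω = j} := by
    ext ω
    simp only [Set.mem_ofPred_eq, Set.mem_inter_iff]
    constructor
    · rintro ⟨h1, h2⟩
      rw [hconsist, h1] at h2
      exact ⟨h2, h1⟩
    · rintro ⟨h1, h2⟩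
      refine ⟨h2, ?_⟩
      rw [hconsist, h2]
      exact h1
  change P.real _ ≤ P.real _ ∧ P.real _ ≤ P.real _ + 1 - P.real _
  rw [e]
  have h1 := measureReal_inter_add_sdiff (μ := P) (s := {ω | Yp j ω = i}) hA
  have h2 : P.real ({ω | Yp j ω = i} \ {ω | X ω = j}) ≤ P.real {ω | X ω = j}ᶜ :=
    measureReal_mono (fun ω h => h.2)
  have h3 := probReal_compl_eq_one_sub (μ := P) hA
  have h4 : 0 ≤ P.real ({ω | Yp j ω = i} \ {ω | X ω = j}) := measureReal_nonneg
  constructor <;> linarith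
end

section
/- (Binary probability of necessity, as a special case of Theorem 4.) Take m = n = 2, with treatment values x = 0, x' = 1 and outcome values y = 0, y' = 1, and suppose P(X = x ∧ Y = y) > 0. Then the probability of necessity PN := P(Yp x' = y' | X = x ∧ Y = y) satisfies max{ 0, (P(Y = y) − P(Yp x' = y)) / P(X = x ∧ Y = y) } ≤ PN ≤ min{ 1, (P(Yp x' = y') − P(X = x' ∧ Y = y')) / P(X = x ∧ Y = y) }, where the conditional probability is P(Yp x' = y' ∧ X = x ∧ Y = y) / P(X = x ∧ Y = y). -/
open MeasureTheory

/-- Tian–Pearl bounds for the binary probability of necessity (PN),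
with `x = 0`, `x' = 1`, `y = 0`, `y' = 1`. -/
theorem pn_bounds
    {Ω : Type*} [MeasurableSpace Ω] (P : Measure Ω) [IsProbabilityMeasure P]
    (X : Ω → Fin 2) (Y : Ω → Fin 2) (Yp : Fin 2 → Ω → Fin 2)
    (hX : Measurable X) (hY : Measurable Y) (hYp : ∀ j, Measurable (Yp j))
    (hconsist : ∀ ω, Y ω = Yp (X ω) ω)
    (hpos : 0 < pr P {ω | X ω = 0 ∧ Y ω = 0}) :
    max 0 ((pr P {ω | Y ω = 0} - pr P {ω | Yp 1 ω = 0})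
            / pr P {ω | X ω = 0 ∧ Y ω = 0})
      ≤ pr P {ω | Yp 1 ω = 1 ∧ X ω = 0 ∧ Y ω = 0} / pr P {ω | X ω = 0 ∧ Y ω = 0} ∧
    pr P {ω | Yp 1 ω = 1 ∧ X ω = 0 ∧ Y ω = 0} / pr P {ω | X ω = 0 ∧ Y ω = 0}
      ≤ min 1 ((pr P {ω | Yp 1 ω = 1} - pr P {ω | X ω = 1 ∧ Y ω = 1})
                / pr P {ω | X ω = 0 ∧ Y ω = 0}) := by
  have hm : ∀ {A B : Set Ω}, A ⊆ B → pr P A ≤ pr P B := fun h =>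
    ENNReal.toReal_mono (measure_ne_top P _) (measure_mono h)
  have h0 : 0 ≤ pr P {ω | Yp 1 ω = 1 ∧ X ω = 0 ∧ Y ω = 0} := ENNReal.toReal_nonneg
  have h1 : pr P {ω | Yp 1 ω = 1 ∧ X ω = 0 ∧ Y ω = 0} ≤ pr P {ω | X ω = 0 ∧ Y ω = 0} :=
    hm (fun ω h => h.2)
  have h2 : pr P {ω | Y ω = 0} ≤
      pr P {ω | Yp 1 ω = 0} + pr P {ω | Yp 1 ω = 1 ∧ X ω = 0 ∧ Y ω = 0} := by
    refine le_trans (hm (B := {ω | Yp 1 ω = 0} ∪ {ω | Yp 1 ω = 1 ∧ X ω = 0 ∧ Y ω = 0}) ?_)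
      (measureReal_union_le (μ := P) _ _)
    intro ω (h : Y ω = 0)
    have hc := hconsist ω
    rcases (by omega : X ω = 0 ∨ X ω = 1) with hx | hx
    · rcases (by omega : Yp 1 ω = 0 ∨ Yp 1 ω = 1) with hy | hy
      · exact Or.inl hy
      · exact Or.inr ⟨hy, hx, h⟩
    · left
      rw [hx] at hc
      exact hc.symm.trans h
  have h3 : pr P {ω | Yp 1 ω = 1 ∧ X ω = 0 ∧ Y ω = 0} + pr P {ω | X ω = 1 ∧ Y ω = 1} ≤
      pr P {ω | Yp 1 ω = 1} := by
    have hmeas : MeasurableSet {ω | X ω = 1 ∧ Y ω = 1} :=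
      (hX (measurableSet_singleton 1)).inter (hY (measurableSet_singleton 1))
    have hd : Disjoint {ω | Yp 1 ω = 1 ∧ X ω = 0 ∧ Y ω = 0} {ω | X ω = 1 ∧ Y ω = 1} := by
      rw [Set.disjoint_left]
      rintro ω ⟨_, a, _⟩ ⟨b, _⟩
      rw [a] at b
      exact absurd b (by decide)
    refine le_trans (measureReal_union (μ := P) hd hmeas).ge (hm ?_)
    rintro ω (h | ⟨hx, hy⟩)
    · exact h.1
    · have hc := hconsist ω
      rw [hx] at hc
      exact hc.symm.trans hy
  refine ⟨max_le (div_nonneg h0 hpos.le) ?_, le_min ((div_le_one hpos).2 h1) ?_⟩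
  · exact div_le_div_of_nonneg_right (by linarith) hpos.le
  · exact div_le_div_of_nonneg_right (by linarith) hpos.le
end

section
/- (Tian–Pearl PNS bounds, as a special case of Theorem 5.) Take m = n = 2, with treatment values x = 0, x' = 1 and outcome values y = 0, y' = 1. Then the probability of necessity and sufficiency PNS := P(Yp x = y ∧ Yp x' = y') satisfies max{ 0, P(Yp x = y) − P(Yp x' = y), P(Y = y) − P(Yp x' = y), P(Yp x = y) − P(Y = y) } ≤ PNS ≤ min{ P(Yp x = y), P(Yp x' = y'), P(X = x ∧ Y = y) + P(X = x' ∧ Y = y'), P(Yp x = y) − P(Yp x' = y) + P(X = x ∧ Y = y') + P(X = x' ∧ Y = y) }. -/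
open MeasureTheory

theorem pr_sum {Ω : Type*} [MeasurableSpace Ω] (P : Measure Ω) [IsProbabilityMeasure P]
    (Z : Ω → Fin 2 × Fin 2 × Fin 2) (hZ : Measurable Z)
    (p : Fin 2 × Fin 2 × Fin 2 → Prop) [DecidablePred p] (A : Set Ω)
    (hA : ∀ ω, ω ∈ A ↔ p (Z ω)) :
    pr P A = ∑ t, if p t then pr P (Z ⁻¹' {t}) else 0 := by
  have h : A = ⋃ t ∈ Finset.univ.filter p, Z ⁻¹' {t} := by
    ext ω
    simp [hA]
  rw [← Finset.sum_filter, h]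
  unfold pr
  rw [measure_biUnion_finset, ENNReal.toReal_sum]
  · intro a _
    exact measure_ne_top _ _
  · intro a _ b _ hab
    exact Disjoint.preimage _ (by simpa using hab)
  · intro b _
    exact hZ (measurableSet_singleton b)

/-- Tian–Pearl bounds for the binary probability of necessity and sufficiency (PNS),
with `x = 0`, `x' = 1`, `y = 0`, `y' = 1`. -/
theorem pns_bounds
    {Ω : Type*} [MeasurableSpace Ω] (P : Measure Ω) [IsProbabilityMeasure P]
    (X : Ω → Fin 2) (Y : Ω → Fin 2) (Yp : Fin 2 → Ω → Fin 2)
    (hX : Measurable X) (hY : Measurable Y) (hYp : ∀ j, Measurable (Yp j))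
    (hconsist : ∀ ω, Y ω = Yp (X ω) ω) :
    max (max 0 (pr P {ω | Yp 0 ω = 0} - pr P {ω | Yp 1 ω = 0}))
        (max (pr P {ω | Y ω = 0} - pr P {ω | Yp 1 ω = 0})
             (pr P {ω | Yp 0 ω = 0} - pr P {ω | Y ω = 0}))
      ≤ pr P {ω | Yp 0 ω = 0 ∧ Yp 1 ω = 1} ∧
    pr P {ω | Yp 0 ω = 0 ∧ Yp 1 ω = 1}
      ≤ min (min (pr P {ω | Yp 0 ω = 0}) (pr P {ω | Yp 1 ω = 1}))
            (min (pr P {ω | X ω = 0 ∧ Y ω = 0} + pr P {ω | X ω = 1 ∧ Y ω = 1})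
                 (pr P {ω | Yp 0 ω = 0} - pr P {ω | Yp 1 ω = 0}
                   + pr P {ω | X ω = 0 ∧ Y ω = 1} + pr P {ω | X ω = 1 ∧ Y ω = 0})) := by
  have hZ : Measurable (fun ω => (X ω, Yp 0 ω, Yp 1 ω)) :=
    hX.prodMk ((hYp 0).prodMk (hYp 1))
  have key := pr_sum P _ hZ
  have hq : ∀ t, 0 ≤ pr P ((fun ω => (X ω, Yp 0 ω, Yp 1 ω)) ⁻¹' {t}) :=
    fun t => ENNReal.toReal_nonneg
  have hYf : ∀ ω, Y ω = if X ω = 0 then Yp 0 ω else Yp 1 ω := by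
    intro ω
    rw [hconsist]
    rcases Fin.exists_fin_two.mp ⟨X ω, rfl⟩ with h | h <;> simp [h]
  rw [key (fun t => t.2.1 = 0) {ω | Yp 0 ω = 0} (fun ω => Iff.rfl),
    key (fun t => t.2.2 = 0) {ω | Yp 1 ω = 0} (fun ω => Iff.rfl),
    key (fun t => t.2.2 = 1) {ω | Yp 1 ω = 1} (fun ω => Iff.rfl),
    key (fun t => t.2.1 = 0 ∧ t.2.2 = 1) {ω | Yp 0 ω = 0 ∧ Yp 1 ω = 1} (fun ω => Iff.rfl),
    key (fun t => (if t.1 = 0 then t.2.1 else t.2.2) = 0) {ω | Y ω = 0}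
      (fun ω => by simp [hYf]),
    key (fun t => t.1 = 0 ∧ (if t.1 = 0 then t.2.1 else t.2.2) = 0) {ω | X ω = 0 ∧ Y ω = 0}
      (fun ω => by simp only [Set.mem_ofPred_eq, hYf]),
    key (fun t => t.1 = 0 ∧ (if t.1 = 0 then t.2.1 else t.2.2) = 1) {ω | X ω = 0 ∧ Y ω = 1}
      (fun ω => by simp only [Set.mem_ofPred_eq, hYf]),
    key (fun t => t.1 = 1 ∧ (if t.1 = 0 then t.2.1 else t.2.2) = 0) {ω | X ω = 1 ∧ Y ω = 0}
      (fun ω => by simp only [Set.mem_ofPred_eq, hYf]),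
    key (fun t => t.1 = 1 ∧ (if t.1 = 0 then t.2.1 else t.2.2) = 1) {ω | X ω = 1 ∧ Y ω = 1}
      (fun ω => by simp only [Set.mem_ofPred_eq, hYf])]
  have h000 := hq (0, 0, 0)
  have h001 := hq (0, 0, 1)
  have h010 := hq (0, 1, 0)
  have h011 := hq (0, 1, 1)
  have h100 := hq (1, 0, 0)
  have h101 := hq (1, 0, 1)
  have h110 := hq (1, 1, 0)
  have h111 := hq (1, 1, 1)
  clear key hq
  simp only [Fintype.sum_prod_type, Fin.sum_univ_two, max_le_iff, le_min_iff]
  norm_num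
  refine ⟨⟨⟨?_, ?_⟩, ?_, ?_⟩, ⟨?_, ?_⟩, ?_, ?_⟩ <;> linarith
end
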